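/- (Lemma 3.2(ii).) Let n ≥ 2 and suppose Assumption A holds for the top-order coefficients. Fix σ_∞ ∈ (0,1), c₀ = σ_∞/√(1−σ_∞²), γ ∈ (0,1), δ ∈ (0,1/8) and σ ∈ (0,σ_∞), and let τ(x,ξ) = c₀√(|x|² − (x·v̂(ξ))²) − x·v̂(ξ). Then there exist R₀ > 0 and c₁ > 0 such that: for every R ≥ R₀ and every nonnegative ζ ∈ C^∞(ℝ²ⁿ) with supp ζ ⊂ Γ₋(4δ, σ, R) and {p₂, ζ} ≤ 0 everywhere, the function b₋ = τ^γ ζ satisfies {p₂, b₋}(x,ξ) ≤ −c₁ ⟨x⟩^{−1} b₋(x,ξ) at every point (x,ξ) ∈ supp ζ with x^⊥_ξ ≠ 0. -/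

import Mathlib

/-!
Off the axis `x^⊥_ξ = 0` one has `τ = c₀ |x^⊥_ξ| - x·v̂(ξ)`. Along the free velocity `v(ξ)` the
distance `|x^⊥_ξ|` is constant while `x·v̂` grows at speed `|v|`, so `∂_xτ · v = -|v|`, and `|v|` is
bounded below on `|ξ|² ≥ 1/2` because `g₀` is nondegenerate. The two perturbations are small:

* `∂_ξp₂ - v = O(⟨x⟩^{-μ})`, paired with the bounded vector `∂_xτ` (`fderiv_tauF_x_le`);
* `∂_xp₂ = O(⟨x⟩^{-μ-1})`, paired with `∂_ξτ = O(|x|)` (`abs_fderiv_tauF_xi_le`). The last bound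
  holds uniformly up to the axis: the square root contributes `1/|x^⊥|`, but `∂_ξ(x·v̂)` only sees
  `x^⊥` and so is `O(|x^⊥|)`.

Hence `{p₂, τ} ≤ -m < 0` for large `|x|` (`exists_PB_tauF_le`). Since `0 < τ ≤ (c₀+1)⟨x⟩` on the
support of `ζ` (`tauF_pos`, `tauF_le`), the identity
`{p₂, τ^γ ζ} = γ τ^{γ-1} ζ {p₂, τ} + τ^γ {p₂, ζ}` (`PB_rpow_mul`) and `{p₂, ζ} ≤ 0` give the claim
with `c₁ = γ m / (c₀+1)`.
-/

open MeasureTheory Filter Topology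

noncomputable section

/-- Euclidean norm of `x ∈ ℝⁿ`. -/
def nrm {n : ℕ} (x : Fin n → ℝ) : ℝ := Real.sqrt (∑ j, x j ^ 2)

/-- Japanese bracket `⟨x⟩ = (1 + |x|²)^{1/2}`. -/
def jap {n : ℕ} (x : Fin n → ℝ) : ℝ := Real.sqrt (1 + ∑ j, x j ^ 2)

/-- Japanese bracket of a real number. -/
def japR (t : ℝ) : ℝ := Real.sqrt (1 + t ^ 2)

/-- Euclidean inner product on `ℝⁿ`. -/
def dotp {n : ℕ} (x y : Fin n → ℝ) : ℝ := ∑ j, x j * y j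

/-- Partial derivative in the `j`-th coordinate direction. -/
def pd {n : ℕ} {F : Type} [NormedAddCommGroup F] [NormedSpace ℝ F]
    (j : Fin n) (f : (Fin n → ℝ) → F) (x : Fin n → ℝ) : F :=
  fderiv ℝ f x (Pi.single j 1)

/-- Iterated partial derivatives along a list of coordinate indices
(encoding a multi-index). -/
def pdL {n : ℕ} {F : Type} [NormedAddCommGroup F] [NormedSpace ℝ F] :
    List (Fin n) → ((Fin n → ℝ) → F) → (Fin n → ℝ) → F
  | [], f => f
  | j :: L, f => pd j (pdL L f)

/-- `D_j = -i ∂_j`. -/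
def Dop {n : ℕ} (j : Fin n) (φ : (Fin n → ℝ) → ℂ) (x : Fin n → ℝ) : ℂ :=
  -Complex.I * pd j φ x

/-- The Klein-Gordon type operator
`Pφ = Σ_{j,k} D_j(g^{jk} D_k φ) + (1/2) Σ_j (D_j(u_j φ) + u_j D_j φ) + u_0 φ`. -/
def Pop {n : ℕ} (g : Fin n → Fin n → (Fin n → ℝ) → ℝ)
    (u : Fin (n + 1) → (Fin n → ℝ) → ℝ) (φ : (Fin n → ℝ) → ℂ) (x : Fin n → ℝ) : ℂ :=
  (∑ j, ∑ k, Dop j (fun y => (g j k y : ℂ) * Dop k φ y) x)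
    + (1 / 2) * (∑ j, (Dop j (fun y => (u j.succ y : ℂ) * φ y) x
        + (u j.succ x : ℂ) * Dop j φ x))
    + (u 0 x : ℂ) * φ x

/-- The principal symbol `p₂(x,ξ) = Σ g^{jk}(x) ξ_j ξ_k`. -/
def p2 {n : ℕ} (g : Fin n → Fin n → (Fin n → ℝ) → ℝ) (x ξ : Fin n → ℝ) : ℝ :=
  ∑ j, ∑ k, g j k x * ξ j * ξ k

/-- `v(ξ) = ∂_ξ p₀(ξ) = 2 g₀ ξ` for the constant cometric `g₀`. -/
def vv {n : ℕ} (g₀ : Fin n → Fin n → ℝ) (ξ : Fin n → ℝ) : Fin n → ℝ :=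
  fun j => 2 * ∑ k, g₀ j k * ξ k

/-- `v̂(ξ) = v(ξ)/|v(ξ)|`. -/
def vhat {n : ℕ} (g₀ : Fin n → Fin n → ℝ) (ξ : Fin n → ℝ) : Fin n → ℝ :=
  (nrm (vv g₀ ξ))⁻¹ • vv g₀ ξ

/-- `β(x,ξ) = x̂ · v̂(ξ)`. -/
def betaF {n : ℕ} (g₀ : Fin n → Fin n → ℝ) (x ξ : Fin n → ℝ) : ℝ :=
  dotp ((nrm x)⁻¹ • x) (vhat g₀ ξ)

/-- `x^⊥_ξ = x − (x·v̂(ξ)) v̂(ξ)`. -/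
def perpx {n : ℕ} (g₀ : Fin n → Fin n → ℝ) (x ξ : Fin n → ℝ) : Fin n → ℝ :=
  x - dotp x (vhat g₀ ξ) • vhat g₀ ξ

/-- `τ(x,ξ) = c₀ √(|x|² − (x·v̂(ξ))²) − x·v̂(ξ)`. -/
def tauF {n : ℕ} (g₀ : Fin n → Fin n → ℝ) (c₀ : ℝ) (x ξ : Fin n → ℝ) : ℝ :=
  c₀ * Real.sqrt (nrm x ^ 2 - dotp x (vhat g₀ ξ) ^ 2) - dotp x (vhat g₀ ξ)

/-- Partial derivative of a symbol in the `j`-th `x`-direction. -/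
def pdx {n : ℕ} (j : Fin n) (a : (Fin n → ℝ) → (Fin n → ℝ) → ℝ) :
    (Fin n → ℝ) → (Fin n → ℝ) → ℝ :=
  fun x ξ => fderiv ℝ (fun y => a y ξ) x (Pi.single j 1)

/-- Partial derivative of a symbol in the `j`-th `ξ`-direction. -/
def pdxi {n : ℕ} (j : Fin n) (a : (Fin n → ℝ) → (Fin n → ℝ) → ℝ) :
    (Fin n → ℝ) → (Fin n → ℝ) → ℝ :=
  fun x ξ => fderiv ℝ (fun ζ => a x ζ) ξ (Pi.single j 1)

/-- Iterated `x`-derivatives of a symbol. -/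
def pdxL {n : ℕ} : List (Fin n) → ((Fin n → ℝ) → (Fin n → ℝ) → ℝ) →
    (Fin n → ℝ) → (Fin n → ℝ) → ℝ
  | [], a => a
  | j :: L, a => pdx j (pdxL L a)

/-- Iterated `ξ`-derivatives of a symbol. -/
def pdxiL {n : ℕ} : List (Fin n) → ((Fin n → ℝ) → (Fin n → ℝ) → ℝ) →
    (Fin n → ℝ) → (Fin n → ℝ) → ℝ
  | [], a => a
  | j :: L, a => pdxi j (pdxiL L a)

/-- Poisson bracket `{a,b} = ∂_ξ a · ∂_x b − ∂_x a · ∂_ξ b`. -/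
def PB {n : ℕ} (a b : (Fin n → ℝ) → (Fin n → ℝ) → ℝ) :
    (Fin n → ℝ) → (Fin n → ℝ) → ℝ :=
  fun x ξ => ∑ j, (pdxi j a x ξ * pdx j b x ξ - pdx j a x ξ * pdxi j b x ξ)

/-- The symbol class `S^{k,ℓ} = S(⟨x⟩^ℓ⟨ξ⟩^k, dx²/⟨x⟩² + dξ²/⟨ξ⟩²)`. -/
def SymClass {n : ℕ} (k ℓ : ℝ) (a : (Fin n → ℝ) → (Fin n → ℝ) → ℝ) : Prop :=
  ContDiff ℝ (⊤ : ℕ∞) (fun p : (Fin n → ℝ) × (Fin n → ℝ) => a p.1 p.2) ∧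
  ∀ Lx Lξ : List (Fin n), ∃ C > 0, ∀ x ξ,
    |pdxL Lx (pdxiL Lξ a) x ξ| ≤
      C * jap x ^ (ℓ - (Lx.length : ℝ)) * jap ξ ^ (k - (Lξ.length : ℝ))

/-- The incoming region `Γ₋(δ,σ,R)`. -/
def Gm {n : ℕ} (g₀ : Fin n → Fin n → ℝ) (δ σ R : ℝ) :
    Set ((Fin n → ℝ) × (Fin n → ℝ)) :=
  {p | 1 - δ ≤ nrm p.2 ^ 2 ∧ nrm p.2 ^ 2 ≤ 1 + δ ∧ betaF g₀ p.1 p.2 ≤ σ ∧ R ≤ nrm p.1}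

/-- The outgoing region `Γ₊(δ,σ,R)`. -/
def Gp {n : ℕ} (g₀ : Fin n → Fin n → ℝ) (δ σ R : ℝ) :
    Set ((Fin n → ℝ) × (Fin n → ℝ)) :=
  {p | 1 - δ ≤ nrm p.2 ^ 2 ∧ nrm p.2 ^ 2 ≤ 1 + δ ∧ σ ≤ betaF g₀ p.1 p.2 ∧ R ≤ nrm p.1}

/-- Assumption A for the top-order coefficients `g^{jk}`: smooth, real-valued,
symmetric, everywhere nondegenerate, asymptotically flat with rate `⟨x⟩^{-μ-|α|}`
towards a constant nondegenerate symmetric matrix `g₀`. -/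
structure AssumpG {n : ℕ} (g : Fin n → Fin n → (Fin n → ℝ) → ℝ)
    (g₀ : Fin n → Fin n → ℝ) (μ : ℝ) : Prop where
  smooth : ∀ j k, ContDiff ℝ (⊤ : ℕ∞) (g j k)
  symm : ∀ j k x, g j k x = g k j x
  nondeg : ∀ x (ξ : Fin n → ℝ), (∀ j, ∑ k, g j k x * ξ k = 0) → ξ = 0
  symm0 : ∀ j k, g₀ j k = g₀ k j
  nondeg0 : ∀ ξ : Fin n → ℝ, (∀ j, ∑ k, g₀ j k * ξ k = 0) → ξ = 0
  decay : ∀ L : List (Fin n), ∃ C > 0, ∀ j k x,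
    |pdL L (fun y => g j k y - g₀ j k) x| ≤ C * jap x ^ (-μ - (L.length : ℝ))

/-- Assumption A for the lower-order coefficients `u_j`, `j = 0,…,n`:
smooth, real-valued, with symbol-type decay `⟨x⟩^{-μ-|α|}`. -/
structure AssumpU {n : ℕ} (u : Fin (n + 1) → (Fin n → ℝ) → ℝ) (μ : ℝ) : Prop where
  smooth : ∀ j, ContDiff ℝ (⊤ : ℕ∞) (u j)
  decay : ∀ L : List (Fin n), ∃ C > 0, ∀ j x,
    |pdL L (u j) x| ≤ C * jap x ^ (-μ - (L.length : ℝ))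

/-- `∂_ξ p₂(x,ξ)` (the `x`-component of the Hamilton vector field). -/
def HamX {n : ℕ} (g : Fin n → Fin n → (Fin n → ℝ) → ℝ) (x ξ : Fin n → ℝ) :
    Fin n → ℝ :=
  fun j => fderiv ℝ (fun ζ => p2 g x ζ) ξ (Pi.single j 1)

/-- `−∂_x p₂(x,ξ)` (the `ξ`-component of the Hamilton vector field). -/
def HamXi {n : ℕ} (g : Fin n → Fin n → (Fin n → ℝ) → ℝ) (x ξ : Fin n → ℝ) :
    Fin n → ℝ :=
  fun j => -(fderiv ℝ (fun y => p2 g y ξ) x (Pi.single j 1))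

/-- Assumption B (null non-trapping): every null bicharacteristic with `ξ₀ ≠ 0`
is global and escapes to spatial infinity in both time directions. -/
def AssumptionB {n : ℕ} (g : Fin n → Fin n → (Fin n → ℝ) → ℝ) : Prop :=
  ∀ x₀ ξ₀ : Fin n → ℝ, p2 g x₀ ξ₀ = 0 → ξ₀ ≠ 0 →
    ∃ y η : ℝ → (Fin n → ℝ), y 0 = x₀ ∧ η 0 = ξ₀ ∧
      (∀ t, HasDerivAt y (HamX g (y t) (η t)) t) ∧
      (∀ t, HasDerivAt η (HamXi g (y t) (η t)) t) ∧
      Tendsto (fun t => nrm (y t)) atTop atTop ∧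
      Tendsto (fun t => nrm (y t)) atBot atTop

/-- A test function: smooth and compactly supported. -/
def IsTest {n : ℕ} (φ : (Fin n → ℝ) → ℂ) : Prop :=
  ContDiff ℝ (⊤ : ℕ∞) φ ∧ HasCompactSupport φ

end

/-! ### Euclidean norm and inner product -/

section Euclid

variable {n : ℕ}

lemma nrm_sq (x : Fin n → ℝ) : nrm x ^ 2 = ∑ j, x j ^ 2 :=
  Real.sq_sqrt (Finset.sum_nonneg fun _ _ => sq_nonneg _)

lemma nrm_nonneg (x : Fin n → ℝ) : 0 ≤ nrm x := Real.sqrt_nonneg _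

lemma dotp_self (x : Fin n → ℝ) : dotp x x = nrm x ^ 2 := by
  rw [nrm_sq]; exact Finset.sum_congr rfl fun _ _ => (sq _).symm

lemma dotp_comm (x y : Fin n → ℝ) : dotp x y = dotp y x :=
  Finset.sum_congr rfl fun _ _ => mul_comm _ _

lemma dotp_add_left (x y z : Fin n → ℝ) : dotp (x + y) z = dotp x z + dotp y z := by
  simp [dotp, add_mul, Finset.sum_add_distrib]

lemma dotp_sub_left (x y z : Fin n → ℝ) : dotp (x - y) z = dotp x z - dotp y z := by
  simp [dotp, sub_mul, Finset.sum_sub_distrib]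

lemma dotp_smul_left (c : ℝ) (x z : Fin n → ℝ) : dotp (c • x) z = c * dotp x z := by
  simp [dotp, Finset.mul_sum, mul_assoc]

lemma dotp_add_right (x y z : Fin n → ℝ) : dotp x (y + z) = dotp x y + dotp x z := by
  simp [dotp, mul_add, Finset.sum_add_distrib]

lemma dotp_smul_right (c : ℝ) (x z : Fin n → ℝ) : dotp x (c • z) = c * dotp x z := by
  rw [dotp_comm, dotp_smul_left, dotp_comm]

/-- Cauchy–Schwarz. -/
lemma abs_dotp_le (x y : Fin n → ℝ) : |dotp x y| ≤ nrm x * nrm y := by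
  apply abs_le_of_sq_le_sq _ (mul_nonneg (nrm_nonneg _) (nrm_nonneg _))
  rw [mul_pow, nrm_sq, nrm_sq]
  exact Finset.sum_mul_sq_le_sq_mul_sq _ _ _

lemma abs_apply_le_nrm (x : Fin n → ℝ) (j : Fin n) : |x j| ≤ nrm x := by
  apply abs_le_of_sq_le_sq _ (nrm_nonneg _)
  rw [nrm_sq]
  exact Finset.single_le_sum (f := fun j => x j ^ 2) (fun _ _ => sq_nonneg _) (Finset.mem_univ j)

lemma nrm_le_of_forall_abs_le {x : Fin n → ℝ} {B : ℝ} (hB : 0 ≤ B) (h : ∀ j, |x j| ≤ B) :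
    nrm x ≤ n * B := by
  refine (sq_le_sq₀ (nrm_nonneg _) (by positivity)).mp ?_
  rw [nrm_sq]
  calc ∑ j, x j ^ 2 ≤ ∑ _j : Fin n, B ^ 2 :=
        Finset.sum_le_sum fun j _ => sq_le_sq' (by linarith [neg_abs_le (x j), h j])
          ((le_abs_self _).trans (h j))
    _ = n * B ^ 2 := by simp
    _ ≤ (n * B) ^ 2 := by
        rw [mul_pow]
        have : (n : ℝ) ≤ (n : ℝ) ^ 2 := by exact_mod_cast Nat.le_self_pow two_ne_zero n
        gcongr

lemma nrm_pos_of_ne_zero {x : Fin n → ℝ} (h : x ≠ 0) : 0 < nrm x := by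
  obtain ⟨j, hj⟩ := Function.ne_iff.mp h
  exact (abs_pos.mpr hj).trans_le (abs_apply_le_nrm x j)

lemma nrm_le_jap (x : Fin n → ℝ) : nrm x ≤ jap x :=
  Real.sqrt_le_sqrt (by linarith)

lemma jap_pos (x : Fin n → ℝ) : 0 < jap x :=
  Real.sqrt_pos.mpr (by positivity)

lemma nrm_add_smul_sq (x h : Fin n → ℝ) (t : ℝ) :
    nrm (x + t • h) ^ 2 = nrm x ^ 2 + 2 * t * dotp x h + t ^ 2 * nrm h ^ 2 := by
  rw [← dotp_self, ← dotp_self, ← dotp_self]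
  simp only [dotp_add_left, dotp_add_right, dotp_smul_left, dotp_smul_right, dotp_comm h x]
  ring

end Euclid

/-! ### The free velocity, and the size and sign of `τ` -/

section Velocity

variable {n : ℕ} (g₀ : Fin n → Fin n → ℝ)

/-- `v` as a linear map. -/
def vvLin : (Fin n → ℝ) →ₗ[ℝ] (Fin n → ℝ) where
  toFun := vv g₀
  map_add' a b := by
    funext j; simp [vv, mul_add, Finset.sum_add_distrib]
  map_smul' c a := by
    funext j
    simp only [vv, Pi.smul_apply, smul_eq_mul, RingHom.id_apply, Finset.mul_sum]
    exact Finset.sum_congr rfl fun k _ => by ring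

lemma vv_add_smul (ξ η : Fin n → ℝ) (t : ℝ) :
    vv g₀ (ξ + t • η) = vv g₀ ξ + t • vv g₀ η := by
  have := (vvLin g₀).map_add ξ (t • η)
  rw [(vvLin g₀).map_smul] at this
  exact this

/-- The linear map `v` is bounded for the Euclidean norm. -/
lemma exists_nrm_vv_le : ∃ K ≥ 0, ∀ ξ : Fin n → ℝ, nrm (vv g₀ ξ) ≤ K * nrm ξ := by
  obtain ⟨K, hK⟩ := (LinearMap.toContinuousLinearMap (vvLin g₀)).bound
  refine ⟨n * K, mul_nonneg (by positivity) hK.1.le, fun ξ => ?_⟩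
  rw [mul_assoc]
  apply nrm_le_of_forall_abs_le (mul_nonneg hK.1.le (nrm_nonneg _))
  intro j
  calc |vv g₀ ξ j| ≤ ‖vv g₀ ξ‖ := norm_le_pi_norm (vv g₀ ξ) j
    _ ≤ K * ‖ξ‖ := hK.2 ξ
    _ ≤ K * nrm ξ := by
      have := hK.1.le
      gcongr
      exact (pi_norm_le_iff_of_nonneg (nrm_nonneg _)).mpr fun j => abs_apply_le_nrm ξ j

/-- Nondegeneracy of `g₀` bounds `|v(ξ)|` from below on `|ξ|² ≥ 1/2`. -/
lemma exists_le_nrm_vv (h0 : ∀ ξ : Fin n → ℝ, (∀ j, ∑ k, g₀ j k * ξ k = 0) → ξ = 0) :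
    ∃ m > 0, ∀ ξ : Fin n → ℝ, 1 / 2 ≤ nrm ξ ^ 2 → m ≤ nrm (vv g₀ ξ) := by
  have hker : LinearMap.ker (vvLin g₀) = ⊥ := by
    rw [LinearMap.ker_eq_bot']
    intro ξ hξ
    apply h0
    intro j
    have : 2 * ∑ k, g₀ j k * ξ k = 0 := congrFun hξ j
    linarith
  obtain ⟨K, hK, hA⟩ := (vvLin g₀).exists_antilipschitzWith hker
  have hbound : ∀ ξ : Fin n → ℝ, nrm ξ ≤ n * (K * nrm (vv g₀ ξ)) := by
    intro ξ
    apply nrm_le_of_forall_abs_le (mul_nonneg K.2 (nrm_nonneg _))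
    intro j
    have h1 : ‖ξ‖ ≤ K * ‖vvLin g₀ ξ‖ := by
      have := hA.le_mul_dist ξ 0
      simpa using this
    have h2 : ‖vvLin g₀ ξ‖ ≤ nrm (vv g₀ ξ) :=
      (pi_norm_le_iff_of_nonneg (nrm_nonneg _)).mpr fun j => abs_apply_le_nrm (vv g₀ ξ) j
    calc |ξ j| ≤ ‖ξ‖ := norm_le_pi_norm ξ j
      _ ≤ K * ‖vvLin g₀ ξ‖ := h1
      _ ≤ K * nrm (vv g₀ ξ) := by gcongr
  have hK' : (0 : ℝ) < K := by exact_mod_cast hK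
  refine ⟨1 / (2 * (n * K + 1)), by positivity, fun ξ hξ => ?_⟩
  have h1 : 1 / 2 ≤ nrm ξ := by nlinarith [nrm_nonneg ξ]
  have h2 := hbound ξ
  have h3 := nrm_nonneg (vv g₀ ξ)
  rw [div_le_iff₀ (by positivity)]
  nlinarith

variable {g₀} {ξ : Fin n → ℝ}

lemma dotp_vhat_self (hv : 0 < nrm (vv g₀ ξ)) : dotp (vhat g₀ ξ) (vhat g₀ ξ) = 1 := by
  rw [vhat, dotp_smul_left, dotp_smul_right, dotp_self]
  field_simp

lemma nrm_vhat (hv : 0 < nrm (vv g₀ ξ)) : nrm (vhat g₀ ξ) = 1 := by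
  have h := dotp_vhat_self hv
  rw [dotp_self] at h
  nlinarith [nrm_nonneg (vhat g₀ ξ)]

lemma vv_eq_smul_vhat (hv : 0 < nrm (vv g₀ ξ)) :
    vv g₀ ξ = nrm (vv g₀ ξ) • vhat g₀ ξ := by
  rw [vhat, smul_smul, mul_inv_cancel₀ hv.ne', one_smul]

lemma nrm_perpx_sq (hv : 0 < nrm (vv g₀ ξ)) (x : Fin n → ℝ) :
    nrm (perpx g₀ x ξ) ^ 2 = nrm x ^ 2 - dotp x (vhat g₀ ξ) ^ 2 := by
  have h := nrm_add_smul_sq x (vhat g₀ ξ) (-dotp x (vhat g₀ ξ))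
  rw [nrm_vhat hv, neg_smul, ← sub_eq_add_neg] at h
  rw [perpx, h]; ring

/-- The square root in `τ` is `|x^⊥_ξ|`. -/
lemma tauF_eq (hv : 0 < nrm (vv g₀ ξ)) (c₀ : ℝ) (x : Fin n → ℝ) :
    tauF g₀ c₀ x ξ = c₀ * nrm (perpx g₀ x ξ) - dotp x (vhat g₀ ξ) := by
  rw [tauF, ← nrm_perpx_sq hv, Real.sqrt_sq (nrm_nonneg _)]

lemma abs_dotp_vhat_le (hv : 0 < nrm (vv g₀ ξ)) (x : Fin n → ℝ) :
    |dotp x (vhat g₀ ξ)| ≤ nrm x := by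
  simpa [nrm_vhat hv] using abs_dotp_le x (vhat g₀ ξ)

lemma nrm_perpx_le (hv : 0 < nrm (vv g₀ ξ)) (x : Fin n → ℝ) :
    nrm (perpx g₀ x ξ) ≤ nrm x := by
  refine (sq_le_sq₀ (nrm_nonneg _) (nrm_nonneg _)).mp ?_
  rw [nrm_perpx_sq hv]
  nlinarith [sq_nonneg (dotp x (vhat g₀ ξ))]

/-- `τ` is positive on `Γ₋(·, σ, ·)` off the axis: `σ < σ_∞` puts the cone `β ≤ σ` strictly inside
`{τ > 0} = {β < σ_∞}`. -/
lemma tauF_pos {σinf c₀ σ : ℝ} (hσinf : σinf ∈ Set.Ioo (0 : ℝ) 1)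
    (hc₀ : c₀ = σinf / Real.sqrt (1 - σinf ^ 2)) (hσ : σ ∈ Set.Ioo 0 σinf)
    {x : Fin n → ℝ} (hx : 0 < nrm x) (hv : 0 < nrm (vv g₀ ξ)) (hβ : betaF g₀ x ξ ≤ σ)
    (hp : perpx g₀ x ξ ≠ 0) : 0 < tauF g₀ c₀ x ξ := by
  obtain ⟨h0, h1⟩ := hσinf
  have hpos : 0 < 1 - σinf ^ 2 := by nlinarith
  have hc : 0 < c₀ := by rw [hc₀]; positivity
  have hc2 : c₀ ^ 2 * (1 - σinf ^ 2) = σinf ^ 2 := by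
    rw [hc₀, div_pow, Real.sq_sqrt hpos.le]; field_simp
  have hr := nrm_pos_of_ne_zero hp
  have hr2 := nrm_perpx_sq hv x
  rw [tauF_eq hv]
  have hs : dotp x (vhat g₀ ξ) ≤ σ * nrm x := by
    rw [betaF, dotp_smul_left, inv_mul_le_iff₀ hx] at hβ
    linarith
  generalize dotp x (vhat g₀ ξ) = s at *
  generalize nrm (perpx g₀ x ξ) = r at *
  generalize nrm x = N at *
  rcases le_or_gt s 0 with hs0 | hs0
  · nlinarith [mul_pos hc hr]
  · have h2 : s < σinf * N := hs.trans_lt (by nlinarith [hσ.2])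
    have h3 : s ^ 2 < (σinf * N) ^ 2 := by gcongr
    have h4 : s ^ 2 < (c₀ * r) ^ 2 := by
      rw [mul_pow, hr2]
      have : 0 < (1 - σinf ^ 2) * (c₀ ^ 2 * (N ^ 2 - s ^ 2) - s ^ 2) := by
        have e : (1 - σinf ^ 2) * (c₀ ^ 2 * (N ^ 2 - s ^ 2) - s ^ 2)
            = (c₀ ^ 2 * (1 - σinf ^ 2)) * (N ^ 2 - s ^ 2) - (1 - σinf ^ 2) * s ^ 2 := by ring
        rw [e, hc2]; nlinarith
      linarith [pos_of_mul_pos_right this hpos.le]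
    have := lt_of_pow_lt_pow_left₀ 2 (by positivity) h4
    linarith

lemma tauF_le {c₀ : ℝ} (hc : 0 ≤ c₀) (hv : 0 < nrm (vv g₀ ξ)) (x : Fin n → ℝ) :
    tauF g₀ c₀ x ξ ≤ (c₀ + 1) * nrm x := by
  rw [tauF_eq hv]
  have h1 := nrm_perpx_le hv x
  have h2 := abs_le.mp (abs_dotp_vhat_le hv x)
  nlinarith [mul_le_mul_of_nonneg_left h1 hc]

end Velocity

/-! ### Derivatives of `τ` and the Poisson bracket -/

section Derivatives

variable {n : ℕ} {g₀ : Fin n → Fin n → ℝ} {c₀ : ℝ} {x ξ : Fin n → ℝ}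

/-- The radicand of `τ` does not vanish off the axis. -/
lemma radicand_ne (hv : 0 < nrm (vv g₀ ξ)) (hp : perpx g₀ x ξ ≠ 0) :
    nrm x ^ 2 - dotp x (vhat g₀ ξ) ^ 2 ≠ 0 := by
  rw [← nrm_perpx_sq hv]
  exact (pow_pos (nrm_pos_of_ne_zero hp) 2).ne'

lemma differentiableAt_tauF_x (hv : 0 < nrm (vv g₀ ξ)) (hp : perpx g₀ x ξ ≠ 0) :
    DifferentiableAt ℝ (fun y => tauF g₀ c₀ y ξ) x := by
  have h := radicand_ne hv hp
  simp only [nrm_sq, dotp] at h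
  simp only [tauF, nrm_sq, dotp]
  have h1 : DifferentiableAt ℝ
      (fun y : Fin n → ℝ => ∑ j, y j ^ 2 - (∑ j, y j * vhat g₀ ξ j) ^ 2) x := by fun_prop
  have h2 := h1.sqrt h
  fun_prop

lemma differentiableAt_dotp_vhat (hv : 0 < nrm (vv g₀ ξ)) :
    DifferentiableAt ℝ (fun η => dotp x (vhat g₀ η)) ξ := by
  have h0 : ∑ j, vv g₀ ξ j ^ 2 ≠ 0 := by
    rw [← nrm_sq]; positivity
  have hvd : ∀ j, DifferentiableAt ℝ (fun η => vv g₀ η j) ξ := fun j => by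
    simp only [vv]; fun_prop
  have h1 : DifferentiableAt ℝ (fun η => ∑ j, vv g₀ η j ^ 2) ξ := by fun_prop
  have h2 : DifferentiableAt ℝ (fun η => (nrm (vv g₀ η))⁻¹) ξ := (h1.sqrt h0).inv hv.ne'
  simp only [dotp, vhat, Pi.smul_apply, smul_eq_mul]
  fun_prop

lemma differentiableAt_tauF_xi (hv : 0 < nrm (vv g₀ ξ)) (hp : perpx g₀ x ξ ≠ 0) :
    DifferentiableAt ℝ (fun η => tauF g₀ c₀ x η) ξ := by
  have h := radicand_ne hv hp
  have h1 := differentiableAt_dotp_vhat (x := x) hv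
  have h2 : DifferentiableAt ℝ (fun η => nrm x ^ 2 - dotp x (vhat g₀ η) ^ 2) ξ := by fun_prop
  have h3 := h2.sqrt h
  simp only [tauF]
  fun_prop

/-- `∂_xτ · h = c₀ (x^⊥·h)/|x^⊥| − v̂·h`. -/
lemma fderiv_tauF_x (hv : 0 < nrm (vv g₀ ξ)) (hp : perpx g₀ x ξ ≠ 0) (h : Fin n → ℝ) :
    fderiv ℝ (fun y => tauF g₀ c₀ y ξ) x h
      = c₀ * (dotp (perpx g₀ x ξ) h / nrm (perpx g₀ x ξ)) - dotp h (vhat g₀ ξ) := by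
  rw [← (differentiableAt_tauF_x hv hp).lineDeriv_eq_fderiv]
  apply HasLineDerivAt.lineDeriv
  unfold HasLineDerivAt
  simp only [tauF, nrm_add_smul_sq, dotp_add_left, dotp_smul_left]
  have hne := radicand_ne hv hp
  have hs : HasDerivAt (fun t : ℝ => dotp x (vhat g₀ ξ) + t * dotp h (vhat g₀ ξ))
      (dotp h (vhat g₀ ξ)) 0 := by
    simpa using ((hasDerivAt_id (0 : ℝ)).mul_const (dotp h (vhat g₀ ξ))).const_add
      (dotp x (vhat g₀ ξ))
  have hN : HasDerivAt (fun t : ℝ => nrm x ^ 2 + 2 * t * dotp x h + t ^ 2 * nrm h ^ 2)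
      (2 * dotp x h) 0 := by
    have h1 := (((hasDerivAt_id (0 : ℝ)).const_mul 2).mul_const (dotp x h)).const_add (nrm x ^ 2)
    have h2 := ((hasDerivAt_id (0 : ℝ)).pow 2).mul_const (nrm h ^ 2)
    simpa using h1.fun_add h2
  have hfull := (((hN.sub (hs.pow 2)).sqrt (by simpa using hne)).const_mul c₀).sub hs
  refine hfull.congr_deriv ?_
  have hr : Real.sqrt (nrm x ^ 2 - dotp x (vhat g₀ ξ) ^ 2) = nrm (perpx g₀ x ξ) := by
    rw [← nrm_perpx_sq hv, Real.sqrt_sq (nrm_nonneg _)]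
  have hrpos := nrm_pos_of_ne_zero hp
  simp [hr]
  rw [perpx, dotp_sub_left, dotp_smul_left, dotp_comm h] at *
  left
  rw [div_eq_div_iff (by positivity) (by positivity)]
  ring

/-- `∂_ξ(x·v̂) · η = (x^⊥·v(η))/|v(ξ)|`: only the transversal part of `x` enters, because `|v̂| = 1`
is constant. -/
lemma hasDerivAt_dotp_vhat (hv : 0 < nrm (vv g₀ ξ)) (η : Fin n → ℝ) :
    HasDerivAt (fun t : ℝ => dotp x (vhat g₀ (ξ + t • η)))
      (dotp (perpx g₀ x ξ) (vv g₀ η) / nrm (vv g₀ ξ)) 0 := by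
  have hV : ∀ t : ℝ, nrm (vv g₀ ξ + t • vv g₀ η) = Real.sqrt (nrm (vv g₀ ξ) ^ 2
      + 2 * t * dotp (vv g₀ ξ) (vv g₀ η) + t ^ 2 * nrm (vv g₀ η) ^ 2) := fun t => by
    rw [← nrm_add_smul_sq, Real.sqrt_sq (nrm_nonneg _)]
  simp only [vhat, dotp_smul_right, vv_add_smul, dotp_add_right, hV]
  have hA : HasDerivAt (fun t : ℝ => dotp x (vv g₀ ξ) + t * dotp x (vv g₀ η))
      (dotp x (vv g₀ η)) 0 := by
    simpa using ((hasDerivAt_id (0 : ℝ)).mul_const (dotp x (vv g₀ η))).const_add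
      (dotp x (vv g₀ ξ))
  have hN : HasDerivAt (fun t : ℝ => nrm (vv g₀ ξ) ^ 2
      + 2 * t * dotp (vv g₀ ξ) (vv g₀ η) + t ^ 2 * nrm (vv g₀ η) ^ 2)
      (2 * dotp (vv g₀ ξ) (vv g₀ η)) 0 := by
    have h1 := (((hasDerivAt_id (0 : ℝ)).const_mul 2).mul_const
      (dotp (vv g₀ ξ) (vv g₀ η))).const_add (nrm (vv g₀ ξ) ^ 2)
    have h2 := ((hasDerivAt_id (0 : ℝ)).pow 2).mul_const (nrm (vv g₀ η) ^ 2)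
    simpa using h1.fun_add h2
  have hsq : Real.sqrt (nrm (vv g₀ ξ) ^ 2) = nrm (vv g₀ ξ) := Real.sqrt_sq hv.le
  have hfull := ((hN.sqrt (by simpa using hv.ne')).inv (by simpa [hsq] using hv.ne')).mul hA
  refine hfull.congr_deriv ?_
  simp [hsq]
  rw [perpx, vhat, dotp_sub_left]
  simp only [dotp_smul_left, dotp_smul_right]
  field_simp
  ring

lemma fderiv_tauF_xi (hv : 0 < nrm (vv g₀ ξ)) (hp : perpx g₀ x ξ ≠ 0) (η : Fin n → ℝ) :
    fderiv ℝ (fun η => tauF g₀ c₀ x η) ξ η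
      = -(c₀ * (dotp x (vhat g₀ ξ) / nrm (perpx g₀ x ξ)) + 1)
          * (dotp (perpx g₀ x ξ) (vv g₀ η) / nrm (vv g₀ ξ)) := by
  rw [← (differentiableAt_tauF_xi hv hp).lineDeriv_eq_fderiv]
  apply HasLineDerivAt.lineDeriv
  unfold HasLineDerivAt
  simp only [tauF]
  have hs := hasDerivAt_dotp_vhat (x := x) hv η
  have hne := radicand_ne hv hp
  have hfull := ((((hs.pow 2).const_sub (nrm x ^ 2)).sqrt (by simpa using hne)).const_mul c₀).sub hs
  refine hfull.congr_deriv ?_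
  have hr : Real.sqrt (nrm x ^ 2 - dotp x (vhat g₀ ξ) ^ 2) = nrm (perpx g₀ x ξ) := by
    rw [← nrm_perpx_sq hv, Real.sqrt_sq (nrm_nonneg _)]
  have hrpos := nrm_pos_of_ne_zero hp
  simp [hr]
  field_simp
  ring

lemma sum_mul_fderiv_single (f : (Fin n → ℝ) → ℝ) (y X : Fin n → ℝ) :
    ∑ j, X j * fderiv ℝ f y (Pi.single j 1) = fderiv ℝ f y X := by
  conv_rhs => rw [pi_eq_sum_univ' X, map_sum]
  refine Finset.sum_congr rfl fun j _ => ?_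
  rw [map_smul, smul_eq_mul]

/-- The Poisson bracket is the derivative of `b` along the Hamilton field of `a`. -/
lemma PB_eq (a b : (Fin n → ℝ) → (Fin n → ℝ) → ℝ) (x ξ : Fin n → ℝ) :
    PB a b x ξ = fderiv ℝ (fun y => b y ξ) x (fun j => pdxi j a x ξ)
      - fderiv ℝ (fun η => b x η) ξ (fun j => pdx j a x ξ) := by
  rw [← sum_mul_fderiv_single, ← sum_mul_fderiv_single, ← Finset.sum_sub_distrib]
  rfl

/-- Leibniz and chain rule: `{a, τ^γ ζ} = γ τ^{γ-1} ζ {a, τ} + τ^γ {a, ζ}`. -/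
lemma PB_rpow_mul (a : (Fin n → ℝ) → (Fin n → ℝ) → ℝ) {τ ζ : (Fin n → ℝ) → (Fin n → ℝ) → ℝ}
    {γ : ℝ} (hτ : τ x ξ ≠ 0)
    (hτx : DifferentiableAt ℝ (fun y => τ y ξ) x) (hτξ : DifferentiableAt ℝ (fun η => τ x η) ξ)
    (hζx : DifferentiableAt ℝ (fun y => ζ y ξ) x) (hζξ : DifferentiableAt ℝ (fun η => ζ x η) ξ) :
    PB a (fun y η => τ y η ^ γ * ζ y η) x ξ
      = γ * τ x ξ ^ (γ - 1) * ζ x ξ * PB a τ x ξ + τ x ξ ^ γ * PB a ζ x ξ := by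
  have h1 := ((hτx.hasFDerivAt.rpow_const (p := γ) (Or.inl hτ)).mul hζx.hasFDerivAt).fderiv
  have h2 := ((hτξ.hasFDerivAt.rpow_const (p := γ) (Or.inl hτ)).mul hζξ.hasFDerivAt).fderiv
  simp only [PB_eq]
  erw [h1, h2]
  simp
  ring

end Derivatives

/-! ### Asymptotics of the Hamilton field and the bracket with `τ` -/

section Hamiltonian

variable {n : ℕ} {g : Fin n → Fin n → (Fin n → ℝ) → ℝ} {g₀ : Fin n → Fin n → ℝ} {μ : ℝ}

lemma pdxi_p2 (hsymm : ∀ j k x, g j k x = g k j x) (j : Fin n) (x ξ : Fin n → ℝ) :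
    pdxi j (p2 g) x ξ = 2 * ∑ k, g j k x * ξ k := by
  have hd : ∀ i : Fin n, HasFDerivAt (fun η : Fin n → ℝ => η i)
      (ContinuousLinearMap.proj (R := ℝ) (φ := fun _ : Fin n => ℝ) i) ξ :=
    fun i => hasFDerivAt_apply i ξ
  have h := HasFDerivAt.fun_sum (u := Finset.univ) fun i (_ : i ∈ Finset.univ) =>
    HasFDerivAt.fun_sum (u := Finset.univ) fun k (_ : k ∈ Finset.univ) =>
      ((hd i).const_mul (g i k x)).mul (hd k)
  have h' := h.fderiv
  unfold pdxi p2
  erw [h']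
  simp [Pi.single_apply, Finset.sum_add_distrib, two_mul]
  congr 1
  · exact Finset.sum_congr rfl fun k _ => by rw [hsymm j k]
  · exact Finset.sum_congr rfl fun k _ => mul_comm _ _

lemma pdx_p2 (hsm : ∀ j k, ContDiff ℝ (⊤ : ℕ∞) (g j k)) (j : Fin n) (x ξ : Fin n → ℝ) :
    pdx j (p2 g) x ξ = ∑ i, ∑ k, pd j (g i k) x * ξ i * ξ k := by
  have hd : ∀ i k, HasFDerivAt (g i k) (fderiv ℝ (g i k) x) x := fun i k =>
    ((hsm i k).differentiable (by simp)).differentiableAt.hasFDerivAt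
  have h := HasFDerivAt.fun_sum (u := Finset.univ) fun i (_ : i ∈ Finset.univ) =>
    HasFDerivAt.fun_sum (u := Finset.univ) fun k (_ : k ∈ Finset.univ) =>
      ((hd i k).mul_const (ξ i)).mul_const (ξ k)
  have h' := h.fderiv
  unfold pdx p2 pd
  erw [h']
  simp only [sum_apply, smul_apply, smul_eq_mul]
  exact Finset.sum_congr rfl fun i _ => Finset.sum_congr rfl fun k _ => by ring

/-- `∂_ξp₂ = v + O(⟨x⟩^{-μ})` on bounded sets of `ξ`. -/
lemma exists_nrm_pdxi_sub_le (hg : AssumpG g g₀ μ) : ∃ C ≥ 0, ∀ x ξ : Fin n → ℝ, nrm ξ ≤ 2 →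
    nrm ((fun j => pdxi j (p2 g) x ξ) - vv g₀ ξ) ≤ C * jap x ^ (-μ) := by
  obtain ⟨C, hC, hd⟩ := hg.decay []
  refine ⟨n * (4 * n * C), by positivity, fun x ξ hξ => ?_⟩
  have hJ : 0 ≤ jap x ^ (-μ) := Real.rpow_nonneg (jap_pos x).le _
  rw [mul_assoc]
  apply nrm_le_of_forall_abs_le (by positivity)
  intro j
  have e : ((fun j => pdxi j (p2 g) x ξ) - vv g₀ ξ) j = 2 * ∑ k, (g j k x - g₀ j k) * ξ k := by
    simp only [Pi.sub_apply, pdxi_p2 hg.symm, vv, sub_mul, Finset.sum_sub_distrib]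
    ring
  have hb : |∑ k, (g j k x - g₀ j k) * ξ k| ≤ n * (C * jap x ^ (-μ) * 2) := by
    calc _ ≤ ∑ k, |(g j k x - g₀ j k) * ξ k| := Finset.abs_sum_le_sum_abs _ _
      _ ≤ ∑ _k : Fin n, C * jap x ^ (-μ) * 2 := by
        refine Finset.sum_le_sum fun k _ => ?_
        rw [abs_mul]
        have h1 := hd j k x
        simp only [pdL, List.length_nil, Nat.cast_zero, sub_zero] at h1
        exact mul_le_mul h1 ((abs_apply_le_nrm ξ k).trans hξ) (abs_nonneg _) (by positivity)
      _ = _ := by simp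
  rw [e, abs_mul, abs_two]
  linarith

/-- `∂_xp₂ = O(⟨x⟩^{-μ-1})` on bounded sets of `ξ`. -/
lemma exists_nrm_pdx_le (hg : AssumpG g g₀ μ) : ∃ C ≥ 0, ∀ x ξ : Fin n → ℝ, nrm ξ ≤ 2 →
    nrm (fun j => pdx j (p2 g) x ξ) ≤ C * jap x ^ (-μ - 1) := by
  choose C hC hd using fun j => hg.decay [j]
  set C' := ∑ j, C j with hC'
  have hC'0 : 0 ≤ C' := Finset.sum_nonneg fun j _ => (hC j).le
  refine ⟨n * (n * (n * (C' * 4))), by positivity, fun x ξ hξ => ?_⟩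
  have hJ : 0 ≤ jap x ^ (-μ - 1) := Real.rpow_nonneg (jap_pos x).le _
  rw [mul_assoc]
  apply nrm_le_of_forall_abs_le (by positivity)
  intro j
  rw [pdx_p2 hg.smooth]
  have hterm : ∀ i k, |pd j (g i k) x * ξ i * ξ k| ≤ C' * jap x ^ (-μ - 1) * 2 * 2 := by
    intro i k
    have h1 := hd j i k x
    have e : pdL [j] (fun y => g i k y - g₀ i k) x = pd j (g i k) x := by
      simp only [pdL, pd, fderiv_sub_const]
    rw [e] at h1
    simp only [List.length_cons, List.length_nil, zero_add, Nat.cast_one] at h1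
    have h2 : C j ≤ C' := Finset.single_le_sum (fun j _ => (hC j).le) (Finset.mem_univ j)
    rw [abs_mul, abs_mul]
    have h3 : |pd j (g i k) x| ≤ C' * jap x ^ (-μ - 1) :=
      h1.trans (mul_le_mul_of_nonneg_right h2 hJ)
    have h4 := (abs_apply_le_nrm ξ i).trans hξ
    have h5 := (abs_apply_le_nrm ξ k).trans hξ
    gcongr
  calc |∑ i, ∑ k, pd j (g i k) x * ξ i * ξ k|
      ≤ ∑ i, |∑ k, pd j (g i k) x * ξ i * ξ k| := Finset.abs_sum_le_sum_abs _ _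
    _ ≤ ∑ i, ∑ k, |pd j (g i k) x * ξ i * ξ k| :=
        Finset.sum_le_sum fun i _ => Finset.abs_sum_le_sum_abs _ _
    _ ≤ ∑ _i : Fin n, ∑ _k : Fin n, C' * jap x ^ (-μ - 1) * 2 * 2 :=
        Finset.sum_le_sum fun i _ => Finset.sum_le_sum fun k _ => hterm i k
    _ = n * (n * (C' * 4)) * jap x ^ (-μ - 1) := by simp; ring

variable {c₀ : ℝ} {x ξ : Fin n → ℝ}

/-- `∂_xτ · X ≤ -|v| + (c₀+1)|X - v|`: along the free velocity `v` the transversal distance is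
constant and `x·v̂` grows at speed `|v|`. -/
lemma fderiv_tauF_x_le (hc : 0 ≤ c₀) (hv : 0 < nrm (vv g₀ ξ)) (hp : perpx g₀ x ξ ≠ 0)
    (X : Fin n → ℝ) :
    fderiv ℝ (fun y => tauF g₀ c₀ y ξ) x X
      ≤ -nrm (vv g₀ ξ) + (c₀ + 1) * nrm (X - vv g₀ ξ) := by
  set e := X - vv g₀ ξ with he
  have hX : X = vv g₀ ξ + e := by simp [he]
  have hr := nrm_pos_of_ne_zero hp
  have h1 : fderiv ℝ (fun y => tauF g₀ c₀ y ξ) x (vv g₀ ξ) = -nrm (vv g₀ ξ) := by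
    rw [fderiv_tauF_x hv hp]
    have e1 : dotp (vv g₀ ξ) (vhat g₀ ξ) = nrm (vv g₀ ξ) := by
      conv_lhs => rw [vv_eq_smul_vhat hv, dotp_smul_left, dotp_vhat_self hv, mul_one]
    have e2 : dotp (perpx g₀ x ξ) (vv g₀ ξ) = 0 := by
      rw [vv_eq_smul_vhat hv, dotp_smul_right, perpx, dotp_sub_left, dotp_smul_left,
        dotp_vhat_self hv]
      ring
    rw [e1, e2]; simp
  have h2 : fderiv ℝ (fun y => tauF g₀ c₀ y ξ) x e ≤ (c₀ + 1) * nrm e := by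
    rw [fderiv_tauF_x hv hp]
    have b1 : dotp (perpx g₀ x ξ) e / nrm (perpx g₀ x ξ) ≤ nrm e := by
      rw [div_le_iff₀ hr]
      linarith [(le_abs_self _).trans (abs_dotp_le (perpx g₀ x ξ) e)]
    have b2 := abs_le.mp (abs_dotp_vhat_le hv e)
    nlinarith [mul_le_mul_of_nonneg_left b1 hc]
  rw [hX, map_add, h1]
  linarith

/-- `|∂_ξτ · η| ≤ (c₀+1)|x||v(η)|/|v(ξ)|`: the factor `1/|x^⊥|` from the square root is
compensated by `∂_ξ(x·v̂) = O(|x^⊥|)`. -/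
lemma abs_fderiv_tauF_xi_le (hc : 0 ≤ c₀) (hv : 0 < nrm (vv g₀ ξ)) (hp : perpx g₀ x ξ ≠ 0)
    (η : Fin n → ℝ) :
    |fderiv ℝ (fun η => tauF g₀ c₀ x η) ξ η|
      ≤ (c₀ + 1) * nrm x * nrm (vv g₀ η) / nrm (vv g₀ ξ) := by
  have hr := nrm_pos_of_ne_zero hp
  rw [fderiv_tauF_xi hv hp, abs_mul, abs_neg, abs_div, abs_of_pos hv, ← mul_div_assoc]
  refine div_le_div_of_nonneg_right ?_ hv.le
  have b1 : |c₀ * (dotp x (vhat g₀ ξ) / nrm (perpx g₀ x ξ)) + 1|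
      ≤ c₀ * (nrm x / nrm (perpx g₀ x ξ)) + 1 := by
    refine (abs_add_le _ _).trans ?_
    rw [abs_mul, abs_of_nonneg hc, abs_div, abs_of_pos hr, abs_one]
    have := abs_dotp_vhat_le hv x
    gcongr
  have b2 := abs_dotp_le (perpx g₀ x ξ) (vv g₀ η)
  calc _ ≤ (c₀ * (nrm x / nrm (perpx g₀ x ξ)) + 1) * (nrm (perpx g₀ x ξ) * nrm (vv g₀ η)) :=
        mul_le_mul b1 b2 (abs_nonneg _) (by have := nrm_nonneg x; positivity)
    _ = (c₀ * nrm x + nrm (perpx g₀ x ξ)) * nrm (vv g₀ η) := by field_simp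
    _ ≤ (c₀ * nrm x + nrm x) * nrm (vv g₀ η) := by
        have := nrm_perpx_le hv x
        have := nrm_nonneg (vv g₀ η)
        gcongr
    _ = _ := by ring

/-- `{p₂, τ}` is bounded above by a negative constant for `|ξ|² ∈ [1/2, 3/2]`, `|x|` large and
off the axis. -/
lemma exists_PB_tauF_le (hμ0 : 0 < μ) (hg : AssumpG g g₀ μ) (hc : 0 ≤ c₀) :
    ∃ R₀ > 0, ∃ m > 0, ∀ x ξ : Fin n → ℝ, 1 / 2 ≤ nrm ξ ^ 2 → nrm ξ ^ 2 ≤ 3 / 2 → R₀ ≤ nrm x →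
      perpx g₀ x ξ ≠ 0 → 0 < nrm (vv g₀ ξ) ∧ PB (p2 g) (tauF g₀ c₀) x ξ ≤ -m := by
  obtain ⟨m, hm, hvm⟩ := exists_le_nrm_vv g₀ hg.nondeg0
  obtain ⟨K, hK, hvK⟩ := exists_nrm_vv_le g₀
  obtain ⟨A, hA, hAb⟩ := exists_nrm_pdxi_sub_le hg
  obtain ⟨B, hB, hBb⟩ := exists_nrm_pdx_le hg
  set M := (c₀ + 1) * A + (c₀ + 1) * K * B / m with hM
  have hlim : Tendsto (fun t : ℝ => M * t ^ (-μ)) atTop (𝓝 0) := by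
    simpa using (tendsto_rpow_neg_atTop hμ0).const_mul M
  obtain ⟨T, hT⟩ := eventually_atTop.mp (hlim.eventually (gt_mem_nhds (half_pos hm)))
  refine ⟨max T 1, by positivity, m / 2, half_pos hm, fun x ξ h1 h2 hx hp => ?_⟩
  have hvm' := hvm ξ h1
  have hv : 0 < nrm (vv g₀ ξ) := hm.trans_le hvm'
  refine ⟨hv, ?_⟩
  have hξ : nrm ξ ≤ 2 := by nlinarith [nrm_nonneg ξ]
  have hj := jap_pos x
  have hsmall : M * jap x ^ (-μ) < m / 2 :=
    hT _ (((le_max_left _ _).trans hx).trans (nrm_le_jap x))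
  rw [PB_eq]
  have b1 := fderiv_tauF_x_le hc hv hp (fun j => pdxi j (p2 g) x ξ)
  have b2 := (neg_abs_le _).trans' (neg_le_neg
    (abs_fderiv_tauF_xi_le hc hv hp (fun j => pdx j (p2 g) x ξ)))
  have b3 := hAb x ξ hξ
  have b4 : (c₀ + 1) * nrm x * nrm (vv g₀ (fun j => pdx j (p2 g) x ξ)) / nrm (vv g₀ ξ)
      ≤ (c₀ + 1) * K * B / m * jap x ^ (-μ) := by
    have e : jap x ^ (-μ) = jap x * jap x ^ (-μ - 1) := by
      rw [Real.rpow_sub_one hj.ne']; field_simp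
    have hJ : 0 ≤ jap x ^ (-μ - 1) := Real.rpow_nonneg hj.le _
    have i1 := (hvK _).trans (mul_le_mul_of_nonneg_left (hBb x ξ hξ) hK)
    have i2 := nrm_le_jap x
    have i3 := nrm_nonneg (vv g₀ (fun j => pdx j (p2 g) x ξ))
    calc _ ≤ (c₀ + 1) * jap x * (K * (B * jap x ^ (-μ - 1))) / m := by gcongr
      _ = _ := by rw [e]; ring
  have b5 := mul_le_mul_of_nonneg_left b3 (by linarith : 0 ≤ c₀ + 1)
  have e : M * jap x ^ (-μ) = (c₀ + 1) * (A * jap x ^ (-μ))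
      + (c₀ + 1) * K * B / m * jap x ^ (-μ) := by rw [hM]; ring
  linarith

end Hamiltonian

/-- Lemma 3.2(ii). Under Assumption A for the top-order
coefficients, with `σ_∞ ∈ (0,1)`, `c₀ = σ_∞/√(1−σ_∞²)`, `γ ∈ (0,1)`,
`δ ∈ (0,1/8)`, `σ ∈ (0,σ_∞)`: there are `R₀ > 0` and `c₁ > 0` such that for
every `R ≥ R₀` and every nonnegative smooth `ζ` with `supp ζ ⊂ Γ₋(4δ,σ,R)`
and `{p₂,ζ} ≤ 0` everywhere, the observable `b₋ = τ^γ ζ` satisfies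
`{p₂,b₋} ≤ −c₁⟨x⟩^{−1} b₋` at every point of `supp ζ` with `x^⊥_ξ ≠ 0`. -/
theorem stmt_10 {n : ℕ} (hn : 2 ≤ n)
    (g : Fin n → Fin n → (Fin n → ℝ) → ℝ) (g₀ : Fin n → Fin n → ℝ)
    (μ : ℝ) (hμ0 : 0 < μ) (hμ1 : μ < 1) (hg : AssumpG g g₀ μ)
    (σinf : ℝ) (hσinf : σinf ∈ Set.Ioo (0 : ℝ) 1)
    (c₀ : ℝ) (hc₀ : c₀ = σinf / Real.sqrt (1 - σinf ^ 2))
    (γ δ σ : ℝ) (hγ : γ ∈ Set.Ioo (0 : ℝ) 1) (hδ : δ ∈ Set.Ioo (0 : ℝ) (1 / 8))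
    (hσ : σ ∈ Set.Ioo 0 σinf) :
    ∃ R₀ > (0 : ℝ), ∃ c₁ > (0 : ℝ), ∀ R ≥ R₀,
      ∀ ζ : (Fin n → ℝ) → (Fin n → ℝ) → ℝ,
        (∀ x ξ, 0 ≤ ζ x ξ) →
        ContDiff ℝ (⊤ : ℕ∞) (fun p : (Fin n → ℝ) × (Fin n → ℝ) => ζ p.1 p.2) →
        tsupport (fun p : (Fin n → ℝ) × (Fin n → ℝ) => ζ p.1 p.2)
          ⊆ Gm g₀ (4 * δ) σ R →
        (∀ x ξ, PB (p2 g) ζ x ξ ≤ 0) →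
        ∀ x ξ : Fin n → ℝ,
          (x, ξ) ∈ tsupport (fun p : (Fin n → ℝ) × (Fin n → ℝ) => ζ p.1 p.2) →
          perpx g₀ x ξ ≠ 0 →
          PB (p2 g) (fun y ζ' => tauF g₀ c₀ y ζ' ^ γ * ζ y ζ') x ξ
            ≤ -c₁ * (jap x)⁻¹ * (tauF g₀ c₀ x ξ ^ γ * ζ x ξ) := by
  have hc : 0 ≤ c₀ := by
    rw [hc₀]; exact div_nonneg hσinf.1.le (Real.sqrt_nonneg _)
  obtain ⟨R₀, hR₀, m, hm, H⟩ := exists_PB_tauF_le (c₀ := c₀) hμ0 hg hc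
  have hγ0 := hγ.1
  refine ⟨R₀, hR₀, γ * m / (c₀ + 1), by positivity, ?_⟩
  intro R hR ζ hζ0 hζ hsupp hPB x ξ hmem hp
  obtain ⟨hξ1, hξ2, hβ, hxR⟩ := hsupp hmem
  simp only at hξ1 hξ2 hβ hxR
  obtain ⟨hv, hτPB⟩ := H x ξ (by linarith [hδ.2]) (by linarith [hδ.2]) (hR.trans hxR) hp
  have hx : 0 < nrm x := hR₀.trans_le (hR.trans hxR)
  have hτ : 0 < tauF g₀ c₀ x ξ := tauF_pos hσinf hc₀ hσ hx hv hβ hp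
  have hζd : DifferentiableAt ℝ (fun p : (Fin n → ℝ) × (Fin n → ℝ) => ζ p.1 p.2) (x, ξ) :=
    (hζ.differentiable (by simp)).differentiableAt
  have hζx : DifferentiableAt ℝ (fun y => ζ y ξ) x :=
    hζd.comp (f := fun y => (y, ξ)) x (by fun_prop)
  have hζξ : DifferentiableAt ℝ (fun η => ζ x η) ξ :=
    hζd.comp (f := fun η => (x, η)) ξ (by fun_prop)
  rw [PB_rpow_mul (p2 g) hτ.ne' (differentiableAt_tauF_x hv hp) (differentiableAt_tauF_xi hv hp)
    hζx hζξ]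
  have hτγ : 0 ≤ tauF g₀ c₀ x ξ ^ γ := Real.rpow_nonneg hτ.le _
  have hj := jap_pos x
  have hτle : tauF g₀ c₀ x ξ ≤ (c₀ + 1) * jap x :=
    (tauF_le hc hv x).trans (mul_le_mul_of_nonneg_left (nrm_le_jap x) (by linarith))
  have hz := hζ0 x ξ
  have hB : tauF g₀ c₀ x ξ ^ γ * PB (p2 g) ζ x ξ ≤ 0 :=
    mul_nonpos_of_nonneg_of_nonpos hτγ (hPB x ξ)
  rw [Real.rpow_sub_one hτ.ne']
  have hA : γ * (tauF g₀ c₀ x ξ ^ γ / tauF g₀ c₀ x ξ) * ζ x ξ * PB (p2 g) (tauF g₀ c₀) x ξ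
      ≤ γ * (tauF g₀ c₀ x ξ ^ γ / tauF g₀ c₀ x ξ) * ζ x ξ * -m :=
    mul_le_mul_of_nonneg_left hτPB (by positivity)
  have hC : tauF g₀ c₀ x ξ ^ γ / ((c₀ + 1) * jap x) ≤ tauF g₀ c₀ x ξ ^ γ / tauF g₀ c₀ x ξ := by
    gcongr
  have hD := mul_le_mul_of_nonneg_left hC (by positivity : 0 ≤ γ * m * ζ x ξ)
  have e : -(γ * m / (c₀ + 1)) * (jap x)⁻¹ * (tauF g₀ c₀ x ξ ^ γ * ζ x ξ)
      = -(γ * m * ζ x ξ * (tauF g₀ c₀ x ξ ^ γ / ((c₀ + 1) * jap x))) := by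
    field_simp
  rw [e]
  linarith
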